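/- arXiv:2202.01590 — 2 statements merged into one kernel-verified Lean document; each statement's English description precedes it below -/
import Mathlib

section
/- For every t ∈ (0, t₀), every λ ∈ [0,1] and every x ∈ Ω'', it holds L_{t,λ}(x) ≤ √(C*·t). -/
open Metric Filter Set Topology

/-- The Hopf–Lax-type function `f_t(x,λ) = inf_{y ∈ Ω'} { e^{-2Kλ} d(x,y)²/(2t) - d_Y(u(x),u(y)) }`. -/
noncomputable def fT {X Y : Type*} [MetricSpace X] [MetricSpace Y]
    (Ω' : Set X) (u : X → Y) (K t lam : ℝ) (x : X) : ℝ :=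
  ⨅ y : Ω', (Real.exp (-2 * K * lam) * dist x (y : X) ^ 2 / (2 * t) - dist (u x) (u (y : X)))

/-- The set `S_t(x,λ)` of points of `Ω'` attaining the infimum defining `f_t(x,λ)`. -/
noncomputable def minSet {X Y : Type*} [MetricSpace X] [MetricSpace Y]
    (Ω' : Set X) (u : X → Y) (K t lam : ℝ) (x : X) : Set X :=
  {y ∈ Ω' | fT Ω' u K t lam x
    = Real.exp (-2 * K * lam) * dist x y ^ 2 / (2 * t) - dist (u x) (u y)}

/-- `L_{t,λ}(x) := min { d(x,y) : y ∈ S_t(x,λ) }` (as an infimum, which is attained). -/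
noncomputable def minDist {X Y : Type*} [MetricSpace X] [MetricSpace Y]
    (Ω' : Set X) (u : X → Y) (K t lam : ℝ) (x : X) : ℝ :=
  sInf ((fun y => dist x y) '' minSet Ω' u K t lam x)

/-! Since `y = x` gives the cost `0`, only points of nonpositive cost compete for the infimum, and
for `K * lam ≤ 0` these satisfy `d(x,y)² ≤ 2 t d_Y(u(x),u(y)) ≤ 2 t osc u`. So it suffices to
minimise over the closed ball about `x` of radius `√(C t)` with `2 osc u ≤ C`; this radius is
smaller than `D`, so the ball lies in `Ω'`, and it is compact because `X` is proper. -/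

section HopfLaxCost

variable {X Y : Type*} [MetricSpace X] [MetricSpace Y]

/-- The function `e^{-2Kλ} d(x,y)²/(2t) - d_Y(u(x),u(y))` of `y` whose infimum over `Ω'` is
`fT Ω' u K t lam x`. -/
noncomputable def hopfLaxCost (u : X → Y) (K t lam : ℝ) (x y : X) : ℝ :=
  Real.exp (-2 * K * lam) * dist x y ^ 2 / (2 * t) - dist (u x) (u y)

variable {Ω' : Set X} {u : X → Y} {K t lam : ℝ} {x y : X}

lemma hopfLaxCost_self : hopfLaxCost u K t lam x x = 0 := by
  simp [hopfLaxCost]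

lemma continuousOn_hopfLaxCost {s : Set X} (hu : ContinuousOn u s) :
    ContinuousOn (hopfLaxCost u K t lam x) s := by
  unfold hopfLaxCost
  fun_prop

lemma dist_sq_le_of_hopfLaxCost_nonpos (ht : 0 < t) (hK : K * lam ≤ 0)
    (hy : hopfLaxCost u K t lam x y ≤ 0) : dist x y ^ 2 ≤ 2 * t * dist (u x) (u y) := by
  have one_le_exp : 1 ≤ Real.exp (-2 * K * lam) := Real.one_le_exp (by linarith)
  calc dist x y ^ 2 ≤ Real.exp (-2 * K * lam) * dist x y ^ 2 :=
        le_mul_of_one_le_left (sq_nonneg _) one_le_exp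
    _ ≤ 2 * t * dist (u x) (u y) :=
        (div_le_iff₀' (by positivity)).mp (sub_nonpos.mp hy)

lemma mem_minSet_of_isMinOn (hy : y ∈ Ω') (hmin : IsMinOn (hopfLaxCost u K t lam x) Ω' y) :
    y ∈ minSet Ω' u K t lam x := by
  have isLeast : IsLeast (range fun z : Ω' => hopfLaxCost u K t lam x z)
      (hopfLaxCost u K t lam x y) :=
    ⟨⟨⟨y, hy⟩, rfl⟩, forall_mem_range.mpr fun z => hmin z.2⟩
  exact ⟨hy, isLeast.csInf_eq⟩

lemma minDist_le_dist (hy : y ∈ minSet Ω' u K t lam x) : minDist Ω' u K t lam x ≤ dist x y :=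
  csInf_le ⟨0, forall_mem_image.mpr fun _ _ => dist_nonneg⟩ (mem_image_of_mem _ hy)

lemma exists_mem_minSet_dist_le [ProperSpace X] {osc r : ℝ} (ht : 0 < t) (hK : K * lam ≤ 0)
    (hosc : ∀ y ∈ Ω', dist (u x) (u y) ≤ osc) (hr : 0 ≤ r) (hoscr : 2 * osc * t ≤ r ^ 2)
    (hball : closedBall x r ⊆ Ω') (hu : ContinuousOn u (closedBall x r)) :
    ∃ y ∈ minSet Ω' u K t lam x, dist x y ≤ r := by
  have hx : x ∈ closedBall x r := mem_closedBall_self hr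
  obtain ⟨y, hy, hmin⟩ := (isCompact_closedBall x r).exists_isMinOn ⟨x, hx⟩
    (continuousOn_hopfLaxCost (K := K) (t := t) (lam := lam) (x := x) hu)
  refine ⟨y, mem_minSet_of_isMinOn (hball hy) fun z hz => ?_, mem_closedBall'.mp hy⟩
  rcases le_total (hopfLaxCost u K t lam x z) 0 with hz_nonpos | hz_nonneg
  · have dist_sq_le : dist x z ^ 2 ≤ r ^ 2 :=
      calc dist x z ^ 2 ≤ 2 * t * dist (u x) (u z) :=
            dist_sq_le_of_hopfLaxCost_nonpos ht hK hz_nonpos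
        _ ≤ 2 * t * osc := by gcongr; exact hosc z hz
        _ = 2 * osc * t := by ring
        _ ≤ r ^ 2 := hoscr
    exact hmin (mem_closedBall'.mpr (le_of_sq_le_sq dist_sq_le hr))
  · calc hopfLaxCost u K t lam x y ≤ hopfLaxCost u K t lam x x := hmin hx
      _ = 0 := hopfLaxCost_self
      _ ≤ hopfLaxCost u K t lam x z := hz_nonneg

end HopfLaxCost

lemma closedBall_subset_of_lt_sInf_dist_compl {X : Type*} [PseudoMetricSpace X] {s t : Set X}
    {x : X} {r : ℝ} (hx : x ∈ s) (hr : r < sInf ((fun p : X × X => dist p.1 p.2) '' (s ×ˢ tᶜ))) :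
    closedBall x r ⊆ t := by
  intro z hz
  by_contra hzt
  have sInf_le : sInf ((fun p : X × X => dist p.1 p.2) '' (s ×ˢ tᶜ)) ≤ dist x z :=
    csInf_le ⟨0, forall_mem_image.mpr fun _ _ => dist_nonneg⟩ ⟨(x, z), ⟨hx, hzt⟩, rfl⟩
  exact (hr.trans_le sInf_le).not_ge (mem_closedBall'.mp hz)

lemma mul_lt_sq_of_lt_sq_div_four_mul {C D t : ℝ} (ht : 0 < t) (htD : t < D ^ 2 / (4 * C)) :
    C * t < D ^ 2 := by
  have hC : 0 < C := by
    by_contra! hC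
    exact (ht.trans htD).not_ge (div_nonpos_of_nonneg_of_nonpos (sq_nonneg D) (by linarith))
  have four_mul_lt : 4 * C * t < D ^ 2 := (lt_div_iff₀' (by positivity)).mp htD
  linarith [mul_pos hC ht]

theorem stmt3_general {X Y : Type*} [MetricSpace X] [ProperSpace X] [MetricSpace Y]
    {Ω' Ω'' : Set X} {u : X → Y} (hu : ContinuousOn u Ω') {osc : ℝ}
    (hoscBdd : BddAbove ((fun p : X × X => dist (u p.1) (u p.2)) '' (Ω' ×ˢ Ω')))
    (hosc : osc = sSup ((fun p : X × X => dist (u p.1) (u p.2)) '' (Ω' ×ˢ Ω')))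
    {D : ℝ} (hD : D = sInf ((fun p : X × X => dist p.1 p.2) '' (Ω'' ×ˢ Ω'ᶜ)))
    {C t : ℝ} (hC : 2 * osc ≤ C) (ht : 0 < t) (htD : C * t < D ^ 2)
    {K lam : ℝ} (hK : K * lam ≤ 0) {x : X} (hx : x ∈ Ω'') :
    minDist Ω' u K t lam x ≤ √(C * t) := by
  have osc_nonneg : 0 ≤ osc :=
    hosc ▸ Real.sSup_nonneg (forall_mem_image.mpr fun _ _ => dist_nonneg)
  have Ct_nonneg : 0 ≤ C * t := mul_nonneg (by linarith) ht.le
  have D_nonneg : 0 ≤ D := hD ▸ Real.sInf_nonneg (forall_mem_image.mpr fun _ _ => dist_nonneg)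
  have sqrt_lt_D : √(C * t) < D :=
    (Real.sqrt_lt_sqrt Ct_nonneg htD).trans_eq (Real.sqrt_sq D_nonneg)
  have hball : closedBall x √(C * t) ⊆ Ω' :=
    closedBall_subset_of_lt_sInf_dist_compl hx (hD ▸ sqrt_lt_D)
  have hxΩ' : x ∈ Ω' := hball (mem_closedBall_self (Real.sqrt_nonneg _))
  have dist_le_osc : ∀ y ∈ Ω', dist (u x) (u y) ≤ osc := fun y hy =>
    hosc ▸ le_csSup hoscBdd ⟨(x, y), ⟨hxΩ', hy⟩, rfl⟩
  have osc_mul_le : 2 * osc * t ≤ √(C * t) ^ 2 :=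
    (mul_le_mul_of_nonneg_right hC ht.le).trans (Real.sq_sqrt Ct_nonneg).ge
  obtain ⟨y, hy, hyr⟩ := exists_mem_minSet_dist_le ht hK dist_le_osc (Real.sqrt_nonneg _)
    osc_mul_le hball (hu.mono hball)
  exact (minDist_le_dist hy).trans hyr

theorem stmt3 {X Y : Type*} [MetricSpace X] [ProperSpace X] [MetricSpace Y]
    (Ω' Ω'' : Set X) (hΩ'open : IsOpen Ω') (hΩ'bdd : Bornology.IsBounded Ω')
    (hΩ'ne : Ω'.Nonempty) (hΩ''open : IsOpen Ω'') (hΩ''ne : Ω''.Nonempty)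
    (hsub : Ω'' ⊆ Ω')
    (u : X → Y) (hu : ContinuousOn u Ω')
    (osc : ℝ)
    (hoscBdd : BddAbove ((fun p : X × X => dist (u p.1) (u p.2)) '' (Ω' ×ˢ Ω')))
    (hosc : osc = sSup ((fun p : X × X => dist (u p.1) (u p.2)) '' (Ω' ×ˢ Ω')))
    (K : ℝ) (hK : K ≤ 0)
    (D : ℝ) (hD : D = sInf ((fun p : X × X => dist p.1 p.2) '' (Ω'' ×ˢ Ω'ᶜ)))
    (hDpos : 0 < D)
    (Cstar t₀ : ℝ) (hC : Cstar = 2 * osc + 2) (ht₀ : t₀ = D ^ 2 / (4 * Cstar)) :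
    ∀ t ∈ Ioo (0 : ℝ) t₀, ∀ lam ∈ Icc (0 : ℝ) 1, ∀ x ∈ Ω'',
      minDist Ω' u K t lam x ≤ Real.sqrt (Cstar * t) := by
  intro t ⟨ht, htt₀⟩ lam hlam x hx
  exact stmt3_general hu hoscBdd hosc hD (by linarith) ht
    (mul_lt_sq_of_lt_sq_div_four_mul ht (ht₀ ▸ htt₀)) (mul_nonpos_of_nonpos_of_nonneg hK hlam.1) hx
end

section
/- Let n ≥ 1 and let N be a seminorm on ℝⁿ. Then (4π)^{−n/2} · ∫_{ℝⁿ} e^{−|v|²/4} · N(v)² dv = 2(n+2) · (1/vol(B₁(0))) · ∫_{B₁(0)} N(v)² dv, where B₁(0) is the Euclidean unit ball and vol denotes Lebesgue measure. -/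
open Metric MeasureTheory

/-!
In polar coordinates the integral of `f ‖v‖ • h v`, with `h` positively homogeneous, splits into a
radial factor, which depends on `h` only through its degree, and the integral of `h` over the unit
sphere. The indicator of the unit ball and a Gaussian therefore give proportional integrals of `h`.
In dimension `n` and degree `p`, dividing by the same identity for the constant function `1` gives
`b ^ (-p / 2) * Γ ((n + p) / 2 + 1) / Γ (n / 2 + 1)` as the ratio of the mean of `h` for the
Gaussian `exp (-b * ‖v‖ ^ 2)` to its mean over the unit ball. For `b = 1 / 4` and `p = 2` this is
`4 * (n / 2 + 1) = 2 * (n + 2)`.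
-/

open Module Real Set

/-- Positive homogeneity of degree `p`: `h (r • v) = r ^ p • h v` for `r > 0`. This is the only
property of the squared seminorm that enters the comparison of integrals. The degree is a real
number, and nothing is required at `r = 0`, so that negative degrees are allowed. -/
def IsPosHomogeneous {E F : Type*} [SMul ℝ E] [SMul ℝ F] (p : ℝ) (h : E → F) : Prop :=
  ∀ ⦃r : ℝ⦄, 0 < r → ∀ v, h (r • v) = r ^ p • h v

theorem isPosHomogeneous_const {E F : Type*} [SMul ℝ E] [MulAction ℝ F] (c : F) :
    IsPosHomogeneous 0 fun _ : E ↦ c := fun r _ _ ↦ by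
  rw [rpow_zero, one_smul]

theorem isPosHomogeneous_seminorm_pow {E : Type*} [AddCommGroup E] [Module ℝ E]
    (N : Seminorm ℝ E) (k : ℕ) : IsPosHomogeneous k fun v ↦ N v ^ k := fun r hr v ↦ by
  simp only [map_smul_eq_mul, norm_of_nonneg hr.le, mul_pow, rpow_natCast, smul_eq_mul]

theorem integral_volumeIoiPow {F : Type*} [NormedAddCommGroup F] [NormedSpace ℝ F] (n : ℕ)
    (g : ℝ → F) :
    ∫ y : Ioi (0 : ℝ), g y ∂Measure.volumeIoiPow n = ∫ y in Ioi (0 : ℝ), y ^ n • g y := by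
  simp only [Measure.volumeIoiPow, ENNReal.ofReal]
  rw [integral_withDensity_eq_integral_smul (measurable_subtype_coe.pow_const _).real_toNNReal,
    integral_subtype_comap measurableSet_Ioi fun y : ℝ ↦ (y ^ n).toNNReal • g y]
  refine setIntegral_congr_fun measurableSet_Ioi fun y hy ↦ ?_
  simp only [NNReal.smul_def, coe_toNNReal _ (pow_nonneg (le_of_lt hy) n)]

section AddHaar

variable {E F : Type*} [NormedAddCommGroup E] [NormedSpace ℝ E] [FiniteDimensional ℝ E]
  [Nontrivial E] [MeasurableSpace E] [BorelSpace E] (μ : Measure E) [μ.IsAddHaarMeasure]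
  [NormedAddCommGroup F] [NormedSpace ℝ F]

theorem integral_eq_integral_toSphere_prod_volumeIoiPow (g : E → F) :
    ∫ v, g v ∂μ =
      ∫ x, g (x.2.1 • x.1.1) ∂μ.toSphere.prod (Measure.volumeIoiPow (finrank ℝ E - 1)) := by
  rw [← μ.measurePreserving_homeomorphUnitSphereProd.integral_comp
    (Homeomorph.measurableEmbedding _)]
  calc
    ∫ v, g v ∂μ = ∫ v : ({0}ᶜ : Set E), g v ∂μ.comap (↑) := by
      rw [integral_subtype_comap (measurableSet_singleton _).compl g, restrict_compl_singleton]
    _ = _ := integral_congr_ae <| .of_forall fun v ↦ by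
      have hv : ‖v.1‖ ≠ 0 := norm_ne_zero_iff.mpr v.2
      simp only [homeomorphUnitSphereProd_apply_fst_coe, homeomorphUnitSphereProd_apply_snd_coe,
        smul_inv_smul₀ hv]

variable {p : ℝ} {h : E → F}

theorem IsPosHomogeneous.integral_fun_norm_smul (hh : IsPosHomogeneous p h) (f : ℝ → ℝ) :
    ∫ v, f ‖v‖ • h v ∂μ =
      (∫ y in Ioi (0 : ℝ), y ^ (finrank ℝ E + p - 1) * f y) •
        ∫ x : sphere (0 : E) 1, h x ∂μ.toSphere := by
  have polar_integrand (x : sphere (0 : E) 1 × Ioi (0 : ℝ)) :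
      f ‖x.2.1 • x.1.1‖ • h (x.2.1 • x.1.1) = (x.2.1 ^ p * f x.2.1) • h x.1 := by
    rw [hh x.2.2, norm_smul, norm_eq_of_mem_sphere, mul_one, norm_of_nonneg (le_of_lt x.2.2),
      smul_smul, mul_comm]
  have radial_integrand {y : ℝ} (hy : 0 < y) :
      y ^ (finrank ℝ E - 1) • (y ^ p * f y) = y ^ (finrank ℝ E + p - 1) * f y := by
    rw [smul_eq_mul, ← mul_assoc, ← rpow_natCast, ← rpow_add hy, Nat.cast_pred finrank_pos,
      sub_add_eq_add_sub]
  rw [integral_eq_integral_toSphere_prod_volumeIoiPow]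
  simp only [polar_integrand]
  rw [← integral_prod_swap]
  simp only [Prod.fst_swap, Prod.snd_swap]
  rw [integral_prod_smul (fun y : Ioi (0 : ℝ) ↦ y.1 ^ p * f y) fun x : sphere (0 : E) 1 ↦ h x,
    integral_volumeIoiPow _ fun y ↦ y ^ p * f y,
    setIntegral_congr_fun measurableSet_Ioi fun y hy ↦ radial_integrand hy]

theorem IsPosHomogeneous.setIntegral_ball (hh : IsPosHomogeneous p h)
    (hp : 0 < finrank ℝ E + p) {R : ℝ} (hR : 0 ≤ R) :
    ∫ v in ball (0 : E) R, h v ∂μ =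
      (R ^ (finrank ℝ E + p) / (finrank ℝ E + p)) •
        ∫ x : sphere (0 : E) 1, h x ∂μ.toSphere := by
  have indicator_ball (v : E) :
      (ball (0 : E) R).indicator h v = (Iio R).indicator (1 : ℝ → ℝ) ‖v‖ • h v := by
    simp [indicator]
  have radial_integral : ∫ y in Ioi (0 : ℝ),
      y ^ (finrank ℝ E + p - 1) * (Iio R).indicator (1 : ℝ → ℝ) y =
        R ^ (finrank ℝ E + p) / (finrank ℝ E + p) := by
    have indicator_integrand (y : ℝ) :
        y ^ (finrank ℝ E + p - 1) * (Iio R).indicator (1 : ℝ → ℝ) y =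
          (Iio R).indicator (fun y ↦ y ^ (finrank ℝ E + p - 1)) y := by
      simp [indicator]
    simp only [indicator_integrand]
    rw [setIntegral_indicator measurableSet_Iio, Ioi_inter_Iio, ← integral_Ioc_eq_integral_Ioo,
      ← intervalIntegral.integral_of_le hR, integral_rpow (.inl (by linarith)), sub_add_cancel,
      zero_rpow hp.ne', sub_zero]
  rw [← integral_indicator measurableSet_ball]
  simp only [indicator_ball]
  rw [hh.integral_fun_norm_smul μ, radial_integral]

theorem IsPosHomogeneous.integral_exp_neg_mul_rpow_norm_smul (hh : IsPosHomogeneous p h)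
    (hp : 0 < finrank ℝ E + p) {b q : ℝ} (hb : 0 < b) (hq : 0 < q) :
    ∫ v, exp (-b * ‖v‖ ^ q) • h v ∂μ =
      (b ^ (-(finrank ℝ E + p) / q) * Gamma ((finrank ℝ E + p) / q + 1)) •
        ∫ v in ball (0 : E) 1, h v ∂μ := by
  rw [hh.integral_fun_norm_smul μ fun y ↦ exp (-b * y ^ q),
    integral_rpow_mul_exp_neg_mul_rpow hq (by linarith) hb, hh.setIntegral_ball μ hp zero_le_one,
    smul_smul, sub_add_cancel, one_rpow, Gamma_add_one (div_pos hp hq).ne']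
  congr 1
  field_simp

theorem IsPosHomogeneous.integral_exp_neg_mul_rpow_norm_smul_eq_setAverage
    (hh : IsPosHomogeneous p h) (hp : 0 < finrank ℝ E + p) {b q : ℝ} (hb : 0 < b) (hq : 0 < q) :
    ∫ v, exp (-b * ‖v‖ ^ q) • h v ∂μ =
      ((∫ v : E, exp (-b * ‖v‖ ^ q) ∂μ) *
        (b ^ (-p / q) * (Gamma ((finrank ℝ E + p) / q + 1) / Gamma (finrank ℝ E / q + 1)))) •
        ⨍ v in ball (0 : E) 1, h v ∂μ := by
  have total_mass : ∫ v : E, exp (-b * ‖v‖ ^ q) ∂μ =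
      b ^ (-(finrank ℝ E) / q) * Gamma (finrank ℝ E / q + 1) * μ.real (ball 0 1) := by
    simpa using (isPosHomogeneous_const (E := E) (1 : ℝ)).integral_exp_neg_mul_rpow_norm_smul μ
      (by simp [finrank_pos]) hb hq
  have hball : μ.real (ball (0 : E) 1) ≠ 0 :=
    (ENNReal.toReal_pos (measure_ball_pos μ 0 one_pos).ne' measure_ball_lt_top.ne).ne'
  rw [hh.integral_exp_neg_mul_rpow_norm_smul μ hp hb hq, total_mass, setAverage_eq, smul_smul,
    neg_add, add_div, rpow_add hb]
  congr 1
  field_simp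

end AddHaar

theorem stmt14_general {E F : Type*} [NormedAddCommGroup E] [InnerProductSpace ℝ E]
    [FiniteDimensional ℝ E] [Nontrivial E] [MeasurableSpace E] [BorelSpace E]
    [NormedAddCommGroup F] [NormedSpace ℝ F] {h : E → F} (hh : IsPosHomogeneous 2 h) :
    (4 * π) ^ (-(finrank ℝ E : ℝ) / 2) • ∫ v, exp (-‖v‖ ^ 2 / 4) • h v =
      (2 * ((finrank ℝ E : ℝ) + 2)) • ⨍ v in ball (0 : E) 1, h v := by
  have gaussian_mass :
      ∫ v : E, exp (-(1 / 4) * ‖v‖ ^ (2 : ℝ)) = (4 * π) ^ ((finrank ℝ E : ℝ) / 2) := by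
    simp only [rpow_two]
    rw [GaussianFourier.integral_rexp_neg_mul_sq_norm (by norm_num), div_div_eq_mul_div, div_one,
      mul_comm π]
  have gaussian_factor : (1 / 4 : ℝ) ^ (-2 / 2 : ℝ) *
      (Gamma ((finrank ℝ E + 2) / 2 + 1) / Gamma (finrank ℝ E / 2 + 1)) =
        2 * (finrank ℝ E + 2) := by
    rw [add_div, div_self two_ne_zero, Gamma_add_one (by positivity),
      mul_div_cancel_right₀ _ (by positivity), neg_div, div_self two_ne_zero, rpow_neg_one]
    ring
  have exponent (v : E) : -‖v‖ ^ 2 / 4 = -(1 / 4) * ‖v‖ ^ (2 : ℝ) := by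
    rw [rpow_two]
    ring
  simp only [exponent]
  rw [hh.integral_exp_neg_mul_rpow_norm_smul_eq_setAverage volume (by positivity) (by norm_num)
    two_pos, gaussian_mass, gaussian_factor, smul_smul, ← mul_assoc, ← rpow_add (by positivity),
    neg_div, neg_add_cancel, rpow_zero, one_mul]

theorem stmt14 (n : ℕ) (hn : 1 ≤ n) (N : Seminorm ℝ (EuclideanSpace ℝ (Fin n))) :
    (4 * Real.pi) ^ (-(n : ℝ) / 2) *
        ∫ v : EuclideanSpace ℝ (Fin n), Real.exp (-‖v‖ ^ 2 / 4) * (N v) ^ 2 =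
      2 * ((n : ℝ) + 2) *
        ((volume (ball (0 : EuclideanSpace ℝ (Fin n)) 1)).toReal)⁻¹ *
        ∫ v in ball (0 : EuclideanSpace ℝ (Fin n)) 1, (N v) ^ 2 := by
  have : Nonempty (Fin n) := ⟨⟨0, hn⟩⟩
  simpa [setAverage_eq, measureReal_def, mul_assoc] using
    stmt14_general (isPosHomogeneous_seminorm_pow N 2)
end
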